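/- Let d ≥ 1 be an integer, δ ∈ (0,1], p ∈ (d/2,∞), R ∈ (0,∞). Let Ĥ(m,x) (m a symmetric d×d matrix, x ∈ B_R) be δ-elliptic, measurable in x for each fixed m, with Ĥ(0,·) ∈ L_p on compact subsets of B_R, and let f be in L_p on compact subsets of B_R. Let u be twice continuously differentiable on B_R. Suppose there exists a constant N such that for every ball B_r(x₀) with closure contained in B_R and every φ twice continuously differentiable on B̄_r(x₀), the inequality u(x) ≤ φ(x) + sup_{∂B_r(x₀)} (u − φ)₊ + N r² (⨍_{B_r(x₀)} ((f(y) − Ĥ(D²φ(y),y))₋)^p dy)^{1/p} holds for all x ∈ B_r(x₀). Then Ĥ(D²u(x),x) ≥ f(x) for almost every x ∈ B_R. -/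

import Mathlib

open MeasureTheory Metric Set Filter
open scoped ENNReal RealInnerProductSpace

noncomputable section

/-- Euclidean space `ℝ^d`. -/
abbrev E (d : ℕ) : Type := EuclideanSpace ℝ (Fin d)

/-- Frobenius norm of a `d × d` matrix. -/
def frob {d : ℕ} (m : Matrix (Fin d) (Fin d) ℝ) : ℝ :=
  Real.sqrt (∑ i, ∑ j, (m i j) ^ 2)

/-- `F` is `δ`-elliptic: `δ tr w ≤ F (m + w) - F m ≤ δ⁻¹ tr w` for symmetric `m` and
symmetric positive semidefinite `w`. -/
def Elliptic {d : ℕ} (δ : ℝ) (F : Matrix (Fin d) (Fin d) ℝ → ℝ) : Prop :=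
  ∀ m : Matrix (Fin d) (Fin d) ℝ, m.IsSymm →
    ∀ w : Matrix (Fin d) (Fin d) ℝ, w.PosSemidef →
      δ * w.trace ≤ F (m + w) - F m ∧ F (m + w) - F m ≤ δ⁻¹ * w.trace

/-- Gradient of `u : ℝ^d → ℝ` as a vector in `ℝ^d`. -/
def grad {d : ℕ} (u : E d → ℝ) (x : E d) : E d :=
  (EuclideanSpace.equiv (Fin d) ℝ).symm fun i => fderiv ℝ u x (EuclideanSpace.single i 1)

/-- Hessian matrix of `u : ℝ^d → ℝ`. -/
def hess {d : ℕ} (u : E d → ℝ) (x : E d) : Matrix (Fin d) (Fin d) ℝ :=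
  Matrix.of fun i j =>
    fderiv ℝ (fun y => fderiv ℝ u y (EuclideanSpace.single j 1)) x (EuclideanSpace.single i 1)

/-- Normalized `L_p` norm `(⨍_B |g|^p)^{1/p}` (average over `B`). -/
def nLp {d : ℕ} (p : ℝ) (B : Set (E d)) (g : E d → ℝ) : ℝ≥0∞ :=
  ((volume B)⁻¹ * ∫⁻ y in B, ENNReal.ofReal (|g y| ^ p)) ^ (1 / p)

/-- Unnormalized `L_p` norm `(∫_A |g|^p)^{1/p}`. -/
def Lpn {d : ℕ} (p : ℝ) (A : Set (E d)) (g : E d → ℝ) : ℝ≥0∞ :=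
  (∫⁻ y in A, ENNReal.ofReal (|g y| ^ p)) ^ (1 / p)

/-- Morrey norm `‖g‖_{E_{p,μ}(Ω)} = sup_{ρ>0, x∈Ω} ρ^μ (⨍_{B_ρ(x)} |g 1_Ω|^p)^{1/p}`. -/
def morrey {d : ℕ} (p μ : ℝ) (Ω : Set (E d)) (g : E d → ℝ) : ℝ≥0∞ :=
  ⨆ (ρ : ℝ) (_ : 0 < ρ) (x : E d) (_ : x ∈ Ω),
    ENNReal.ofReal (ρ ^ μ) * nLp p (ball x ρ) (Ω.indicator g)

/-- The `(θ, R₀)`-oscillation condition on `F(m, x)`. -/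
def OscCond {d : ℕ} (δ θ R₀ : ℝ) (F : Matrix (Fin d) (Fin d) ℝ → E d → ℝ) : Prop :=
  ∀ r ∈ Set.Ioc (0 : ℝ) R₀, ∀ z : E d,
    ∃ Fb : Matrix (Fin d) (Fin d) ℝ → ℝ,
      ConvexOn ℝ Set.univ Fb ∧ Elliptic δ Fb ∧ Fb 0 = 0 ∧
      ∀ m : Matrix (Fin d) (Fin d) ℝ, m.IsSymm → frob m = 1 →
        (volume (ball z r))⁻¹ *
            ∫⁻ x in ball z r,
              ⨆ (τ : ℝ) (_ : 0 < τ), ENNReal.ofReal (τ⁻¹ * |F (τ • m) x - Fb (τ • m)|)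
          ≤ ENNReal.ofReal θ

/-- The homogeneity bound `|F(ζ m, x)| ≤ ζ |F(m, x)| + K(x)` for `ζ ∈ [0,1]`. -/
def HomBound {d : ℕ} (F : Matrix (Fin d) (Fin d) ℝ → E d → ℝ) (K : E d → ℝ) : Prop :=
  ∀ ζ ∈ Set.Icc (0 : ℝ) 1, ∀ m : Matrix (Fin d) (Fin d) ℝ, m.IsSymm → ∀ x : E d,
    |F (ζ • m) x| ≤ ζ * |F m x| + K x

/-! Fix `x`, write `M = D²u(x)`, and let `m` be a symmetric matrix with `m ≥ M + κ I`, `κ > 0`.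
The paraboloid touching `u` at `x` with Hessian `m` exceeds `u` by at least `κ r² / 4` on small spheres
`∂B_r(x)`. Lowering it by this amount and comparing at the centre gives
`κ / 4 ≤ N (⨍_{B_r(x)} ((f - H(m, ·))₋)^p)^{1/p}`, and if `x` is a Lebesgue point, letting `r → 0`
gives `κ / 4 ≤ N (f(x) - H(m, x))₋`, so `f(x) ≤ H(m, x)`. The Lebesgue points are common, up to a
null set, to all `m` in a countable dense set of symmetric matrices; such `m` lie above `M` and
arbitrarily close to it, and `H` is Lipschitz in `m` by ellipticity. -/

open Asymptotics Topology
open Matrix (toEuclideanCLM)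
open scoped Matrix.Norms.L2Operator

section Matrix

variable {n : Type*} [Fintype n] [DecidableEq n] {A : Matrix n n ℝ}

theorem posSemidef_iff_inner_toEuclideanCLM (hA : A.IsSymm) :
    A.PosSemidef ↔ ∀ v : EuclideanSpace ℝ n, 0 ≤ ⟪v, toEuclideanCLM (𝕜 := ℝ) A v⟫ := by
  have hA' : A.IsHermitian := by rwa [Matrix.isHermitian_iff_isSymm]
  simp only [Matrix.posSemidef_iff_dotProduct_mulVec, hA', true_and, star_trivial,
    Matrix.inner_toEuclideanCLM]
  exact (WithLp.equiv 2 (n → ℝ)).symm.forall_congr_left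

theorem inner_toEuclideanCLM_left (hA : A.IsSymm) (v w : EuclideanSpace ℝ n) :
    ⟪toEuclideanCLM (𝕜 := ℝ) A v, w⟫ = ⟪v, toEuclideanCLM (𝕜 := ℝ) A w⟫ :=
  Matrix.isSymmetric_toEuclideanLin_iff.2 (Matrix.isHermitian_iff_isSymm.2 hA) v w

theorem posSemidef_add_smul_one_of_norm_le (hA : A.IsSymm) {t : ℝ} (ht : ‖A‖ ≤ t) :
    (A + t • (1 : Matrix n n ℝ)).PosSemidef := by
  rw [posSemidef_iff_inner_toEuclideanCLM (hA.add (Matrix.isSymm_one.smul t))]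
  intro v
  have h_inner : |⟪v, toEuclideanCLM (𝕜 := ℝ) A v⟫| ≤ ‖A‖ * ‖v‖ ^ 2 :=
    calc |⟪v, toEuclideanCLM (𝕜 := ℝ) A v⟫|
        ≤ ‖v‖ * ‖toEuclideanCLM (𝕜 := ℝ) A v‖ := abs_real_inner_le_norm _ _
      _ ≤ ‖v‖ * (‖A‖ * ‖v‖) := by gcongr; exact ContinuousLinearMap.le_opNorm _ _
      _ = ‖A‖ * ‖v‖ ^ 2 := by ring
  have h_scale : ‖A‖ * ‖v‖ ^ 2 ≤ t * ‖v‖ ^ 2 := by gcongr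
  simp only [map_add, map_smul, map_one, add_apply, smul_apply, one_apply_eq_self, inner_add_right,
    real_inner_smul_right, real_inner_self_eq_norm_sq]
  linarith [neg_abs_le ⟪v, toEuclideanCLM (𝕜 := ℝ) A v⟫]

theorem trace_le_card_mul_norm (A : Matrix n n ℝ) : A.trace ≤ Fintype.card n * ‖A‖ := by
  have h_diag (i : n) : A i i ≤ ‖A‖ := by
    set e := EuclideanSpace.single i (1 : ℝ)
    have he : ‖e‖ = 1 := by simp [e]
    calc A i i = ⟪e, toEuclideanCLM (𝕜 := ℝ) A e⟫ := by simp [Matrix.inner_toEuclideanCLM, e]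
      _ ≤ ‖e‖ * ‖toEuclideanCLM (𝕜 := ℝ) A e‖ := real_inner_le_norm _ _
      _ ≤ ‖e‖ * (‖A‖ * ‖e‖) := by gcongr; exact ContinuousLinearMap.le_opNorm _ _
      _ = ‖A‖ := by rw [he]; ring
  calc A.trace ≤ Finset.univ.card • ‖A‖ := Finset.sum_le_card_nsmul _ _ _ fun i _ => h_diag i
    _ = Fintype.card n * ‖A‖ := by rw [nsmul_eq_mul, Finset.card_univ]

theorem exists_mem_posSemidef_sub_of_dense {D : Set {m : Matrix n n ℝ // m.IsSymm}} (hD : Dense D)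
    {M : Matrix n n ℝ} (hM : M.IsSymm) {ε : ℝ} (hε : 0 < ε) :
    ∃ m ∈ D, ∃ κ > (0 : ℝ), (m.1 - M - κ • (1 : Matrix n n ℝ)).PosSemidef ∧ ‖m.1 - M‖ < ε := by
  set I : Matrix n n ℝ := 1
  obtain ⟨t, ht, htε⟩ := exists_pos_mul_lt hε (1 + 2 * ‖I‖)
  obtain ⟨m, hmD, hm⟩ :=
    hD.exists_dist_lt ⟨M + (2 * t) • I, hM.add (Matrix.isSymm_one.smul _)⟩ ht
  rw [dist_comm, Subtype.dist_eq, dist_eq_norm] at hm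
  have h_symm : (m.1 - (M + (2 * t) • I)).IsSymm := m.2.sub (hM.add (Matrix.isSymm_one.smul _))
  refine ⟨m, hmD, t, ht, ?_, ?_⟩
  · have h_split : m.1 - M - t • I = m.1 - (M + (2 * t) • I) + t • I := by module
    exact h_split ▸ posSemidef_add_smul_one_of_norm_le h_symm hm.le
  · calc ‖m.1 - M‖ = ‖(m.1 - (M + (2 * t) • I)) + (2 * t) • I‖ := by congr 1; module
      _ ≤ ‖m.1 - (M + (2 * t) • I)‖ + ‖(2 * t) • I‖ := norm_add_le _ _
      _ ≤ t + 2 * t * ‖I‖ := by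
        rw [norm_smul, Real.norm_of_nonneg (by positivity)]; gcongr
      _ < ε := by linarith

end Matrix

namespace Elliptic

variable {d : ℕ} {δ : ℝ} {F : Matrix (Fin d) (Fin d) ℝ → ℝ} {m n : Matrix (Fin d) (Fin d) ℝ}

theorem le_add_of_posSemidef (hF : Elliptic δ F) (hδ : 0 ≤ δ) (hm : m.IsSymm)
    {w : Matrix (Fin d) (Fin d) ℝ} (hw : w.PosSemidef) : F m ≤ F (m + w) :=
  sub_nonneg.1 ((mul_nonneg hδ hw.trace_nonneg).trans (hF m hm w hw).1)

theorem sub_le_mul_norm (hF : Elliptic δ F) (hδ : 0 ≤ δ) (hm : m.IsSymm) (hn : n.IsSymm) :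
    F m - F n ≤ 2 * d * δ⁻¹ * ‖m - n‖ := by
  set t := ‖m - n‖
  set tI : Matrix (Fin d) (Fin d) ℝ := t • 1 with htI
  have h_symm : (n - tI).IsSymm := hn.sub (Matrix.isSymm_one.smul t)
  have hw : (m - n + tI).PosSemidef := posSemidef_add_smul_one_of_norm_le (hm.sub hn) le_rfl
  have h_lower : F (n - tI) ≤ F n := by
    have htI_psd : tI.PosSemidef := Matrix.PosSemidef.one.smul (norm_nonneg _)
    simpa using hF.le_add_of_posSemidef hδ h_symm htI_psd
  have h_upper : F m - F (n - tI) ≤ δ⁻¹ * (m - n + tI).trace := by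
    convert! (hF _ h_symm _ hw).2 using 3
    abel
  have h_trace : (m - n + tI).trace ≤ 2 * d * t := by
    have h := trace_le_card_mul_norm (m - n)
    simp only [Fintype.card_fin] at h
    simp only [Matrix.trace_add, htI, Matrix.trace_smul, Matrix.trace_one, Fintype.card_fin,
      smul_eq_mul]
    linarith
  calc F m - F n ≤ F m - F (n - tI) := by gcongr
    _ ≤ δ⁻¹ * (2 * d * t) := h_upper.trans (by gcongr)
    _ = 2 * d * δ⁻¹ * t := by ring

theorem abs_sub_le_mul_norm (hF : Elliptic δ F) (hδ : 0 ≤ δ) (hm : m.IsSymm) (hn : n.IsSymm) :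
    |F m - F n| ≤ 2 * d * δ⁻¹ * ‖m - n‖ :=
  abs_sub_le_iff.2 ⟨hF.sub_le_mul_norm hδ hm hn,
    norm_sub_rev m n ▸ hF.sub_le_mul_norm hδ hn hm⟩

theorem le_of_forall_mem_dense (hF : Elliptic δ F) (hδ : 0 ≤ δ)
    {D : Set {m : Matrix (Fin d) (Fin d) ℝ // m.IsSymm}} (hD : Dense D)
    {M : Matrix (Fin d) (Fin d) ℝ} (hM : M.IsSymm) {c : ℝ}
    (hc : ∀ m ∈ D, ∀ κ > (0 : ℝ),
      (m.1 - M - κ • (1 : Matrix (Fin d) (Fin d) ℝ)).PosSemidef → c ≤ F m.1) :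
    c ≤ F M := by
  refine le_of_forall_pos_le_add fun η hη => ?_
  obtain ⟨ε, hε, hεη⟩ := exists_pos_mul_lt hη (2 * d * δ⁻¹)
  obtain ⟨m, hmD, κ, hκ, hmκ, hmε⟩ := exists_mem_posSemidef_sub_of_dense hD hM hε
  have h_sub := hF.sub_le_mul_norm hδ m.2 hM
  have h_scale : 2 * d * δ⁻¹ * ‖m.1 - M‖ ≤ 2 * d * δ⁻¹ * ε := by gcongr
  linarith [hc m hmD κ hκ hmκ]

end Elliptic

section Lebesgue

variable {V : Type*} [NormedAddCommGroup V] [NormedSpace ℝ V] [FiniteDimensional ℝ V]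
  [MeasurableSpace V] [BorelSpace V] (μ : Measure V) [μ.IsAddHaarMeasure]
  {G : V → ℝ≥0∞} {Ω : Set V}

theorem ball_ae_eq_closedBall (x : V) {r : ℝ} (hr : r ≠ 0) : ball x r =ᵐ[μ] closedBall x r := by
  rw [← closedBall_sdiff_sphere]
  exact sdiff_null_ae_eq_self (Measure.addHaar_sphere_of_ne_zero μ x hr)

theorem ae_tendsto_setLAverage_ball (hG : AEMeasurable G μ) (hG_fin : ∫⁻ y, G y ∂μ ≠ ∞) :
    ∀ᵐ x ∂μ, Tendsto (fun r => ⨍⁻ y in ball x r, G y ∂μ) (𝓝[>] 0) (𝓝 (G x)) := by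
  filter_upwards [(Besicovitch.vitaliFamily μ).ae_tendsto_lintegral_div hG hG_fin] with x hx
  refine (hx.comp (Besicovitch.tendsto_filterAt μ x)).congr' ?_
  filter_upwards [self_mem_nhdsWithin] with r (hr : 0 < r)
  simp only [Function.comp_apply, ← setLAverage_eq,
    setLAverage_congr (ball_ae_eq_closedBall μ x hr.ne')]

theorem ae_tendsto_setLAverage_ball_of_isOpen (hG : AEMeasurable G μ) (hΩ : IsOpen Ω)
    (hG_fin : ∀ K, IsCompact K → K ⊆ Ω → ∫⁻ y in K, G y ∂μ ≠ ∞) :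
    ∀ᵐ x ∂μ, x ∈ Ω → Tendsto (fun r => ⨍⁻ y in ball x r, G y ∂μ) (𝓝[>] 0) (𝓝 (G x)) := by
  refine measure_null_of_locally_null _ fun z hz => ?_
  obtain ⟨hzΩ, -⟩ := Classical.not_imp.1 hz
  obtain ⟨ρ, hρ, hρΩ⟩ := nhds_basis_closedBall.mem_iff.1 (hΩ.mem_nhds hzΩ)
  have h_local : ∀ᵐ x ∂μ, x ∈ ball z ρ →
      Tendsto (fun r => ⨍⁻ y in ball x r, G y ∂μ) (𝓝[>] 0) (𝓝 (G x)) := by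
    have h_fin : ∫⁻ y, (closedBall z ρ).indicator G y ∂μ ≠ ∞ := by
      rw [lintegral_indicator measurableSet_closedBall]
      exact hG_fin _ (isCompact_closedBall z ρ) hρΩ
    filter_upwards [ae_tendsto_setLAverage_ball μ (hG.indicator measurableSet_closedBall) h_fin]
      with x hx hxz
    rw [indicator_of_mem (ball_subset_closedBall hxz)] at hx
    refine hx.congr' ?_
    filter_upwards [nhdsWithin_le_nhds (eventually_ball_subset (isOpen_ball.mem_nhds hxz))]
      with r hr
    refine setLAverage_congr_fun measurableSet_ball fun y hy => ?_
    exact indicator_of_mem (ball_subset_closedBall (hr hy)) G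
  refine ⟨_, inter_mem_nhdsWithin _ (ball_mem_nhds z hρ), measure_mono_null ?_ (ae_iff.1 h_local)⟩
  exact fun _ hx h => hx.1 fun _ => h hx.2

end Lebesgue

section LpAverage

variable {d : ℕ} {δ p : ℝ} {H : Matrix (Fin d) (Fin d) ℝ → E d → ℝ}
  {m : Matrix (Fin d) (Fin d) ℝ} {f : E d → ℝ}

theorem nLp_eq_setLAverage_rpow (p : ℝ) (B : Set (E d)) (g : E d → ℝ) :
    nLp p B g = (⨍⁻ y in B, ENNReal.ofReal (|g y| ^ p) ∂volume) ^ (1 / p) := by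
  rw [nLp, setLAverage_eq, ENNReal.div_eq_inv_mul]

theorem ae_tendsto_nLp_ball (hp : 0 < p) {Ω : Set (E d)} (hΩ : IsOpen Ω)
    {g : E d → ℝ} (hg : Measurable g)
    (hg_fin : ∀ K, IsCompact K → K ⊆ Ω → ∫⁻ y in K, ENNReal.ofReal (|g y| ^ p) < ⊤) :
    ∀ᵐ x, x ∈ Ω → Tendsto (fun r => nLp p (ball x r) g) (𝓝[>] 0) (𝓝 (ENNReal.ofReal |g x|)) := by
  have h_meas : AEMeasurable (fun y => ENNReal.ofReal (|g y| ^ p)) := by fun_prop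
  filter_upwards [ae_tendsto_setLAverage_ball_of_isOpen volume h_meas hΩ
    fun K hK hKΩ => (hg_fin K hK hKΩ).ne] with x hx hxΩ
  have h_root : ENNReal.ofReal (|g x| ^ p) ^ (1 / p) = ENNReal.ofReal |g x| := by
    rw [← ENNReal.ofReal_rpow_of_nonneg (abs_nonneg _) hp.le, one_div, ENNReal.rpow_rpow_inv hp.ne']
  simpa only [nLp_eq_setLAverage_rpow, h_root] using (hx hxΩ).ennrpow_const (1 / p)

theorem memLp_ofReal_iff_lintegral_abs_rpow {α : Type*} [MeasurableSpace α] {μ : Measure α}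
    (hp : 0 < p) {g : α → ℝ} (hg : AEStronglyMeasurable g μ) :
    MemLp g (ENNReal.ofReal p) μ ↔ ∫⁻ y, ENNReal.ofReal (|g y| ^ p) ∂μ < ⊤ := by
  rw [MemLp, and_iff_right hg, eLpNorm_lt_top_iff_lintegral_rpow_enorm_lt_top
    (ENNReal.ofReal_pos.2 hp).ne' ENNReal.ofReal_ne_top, ENNReal.toReal_ofReal hp.le]
  simp only [Real.enorm_eq_ofReal_abs, ENNReal.ofReal_rpow_of_nonneg (abs_nonneg _) hp.le]

theorem Elliptic.memLp_of_memLp_zero (hδ : 0 ≤ δ) {q : ℝ≥0∞} {μ : Measure (E d)}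
    [IsFiniteMeasure μ] (hH : ∀ᵐ x ∂μ, Elliptic δ fun m => H m x) (hH0 : MemLp (H 0) q μ)
    (hm : m.IsSymm) (hHm : AEStronglyMeasurable (H m) μ) :
    MemLp (H m) q μ := by
  refine (hH0.norm.add (memLp_const (2 * d * δ⁻¹ * ‖m‖))).mono' hHm ?_
  filter_upwards [hH] with x hx
  have h := hx.abs_sub_le_mul_norm hδ hm Matrix.isSymm_zero
  rw [sub_zero] at h
  simp only [Pi.add_apply, Real.norm_eq_abs]
  linarith [abs_sub_abs_le_abs_sub (H m x) (H 0 x)]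

theorem Elliptic.lintegral_abs_min_sub_rpow_lt_top (hδ : 0 ≤ δ) (hp : 0 < p) {K : Set (E d)}
    (hK : IsCompact K) (hHe : ∀ x ∈ K, Elliptic δ fun m => H m x) (hm : m.IsSymm)
    (hH0m : Measurable (H 0)) (hHm : Measurable (H m)) (hfm : Measurable f)
    (hH0 : ∫⁻ x in K, ENNReal.ofReal (|H 0 x| ^ p) < ⊤)
    (hf : ∫⁻ x in K, ENNReal.ofReal (|f x| ^ p) < ⊤) :
    ∫⁻ x in K, ENNReal.ofReal (|min (f x - H m x) 0| ^ p) < ⊤ := by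
  have : IsFiniteMeasure (volume.restrict K) := ⟨by simpa using hK.measure_lt_top⟩
  have h_meas : Measurable fun x => min (f x - H m x) 0 := by fun_prop
  rw [← memLp_ofReal_iff_lintegral_abs_rpow hp (Measurable.aestronglyMeasurable (by fun_prop))]
    at hH0 hf ⊢
  have hHm_memLp := Elliptic.memLp_of_memLp_zero hδ
    (ae_restrict_of_forall_mem hK.measurableSet hHe) hH0 hm hHm.aestronglyMeasurable
  refine (hf.sub hHm_memLp).mono h_meas.aestronglyMeasurable (ae_of_all _ fun x => ?_)
  simpa using abs_min_sub_min_le_max (f x - H m x) 0 0 0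

end LpAverage

section Hessian

variable {d : ℕ} {u : E d → ℝ} {x : E d} {m : Matrix (Fin d) (Fin d) ℝ}

theorem differentiableAt_fderiv_of_contDiffAt_two {V W : Type*} [NormedAddCommGroup V]
    [NormedSpace ℝ V] [NormedAddCommGroup W] [NormedSpace ℝ W] {g : V → W} {z : V}
    (hg : ContDiffAt ℝ 2 g z) : DifferentiableAt ℝ (fderiv ℝ g) z :=
  (hg.fderiv_right (m := 1) (by norm_num)).differentiableAt one_ne_zero

theorem hess_apply (hu : DifferentiableAt ℝ (fderiv ℝ u) x) (i j : Fin d) :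
    hess u x i j = fderiv ℝ (fderiv ℝ u) x (EuclideanSpace.single i 1)
      (EuclideanSpace.single j 1) := by
  simp [hess, fderiv_clm_apply hu (differentiableAt_const _)]

theorem isSymm_hess (hu : ContDiffAt ℝ 2 u x) : (hess u x).IsSymm := by
  have hDu := differentiableAt_fderiv_of_contDiffAt_two hu
  refine Matrix.IsSymm.ext fun i j => ?_
  rw [hess_apply hDu, hess_apply hDu, (hu.isSymmSndFDerivAt (by simp)).eq]

theorem fderiv_fderiv_apply_eq_inner_hess (hu : DifferentiableAt ℝ (fderiv ℝ u) x) (h k : E d) :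
    fderiv ℝ (fderiv ℝ u) x h k = ⟪h, toEuclideanCLM (𝕜 := ℝ) (hess u x) k⟫ := by
  set U := fderiv ℝ (fderiv ℝ u) x with hU
  have h_coord (v : E d) : v = ∑ i, v i • EuclideanSpace.single i (1 : ℝ) := by
    simpa using ((EuclideanSpace.basisFun (Fin d) ℝ).sum_repr v).symm
  calc U h k
      = U (∑ i, h i • EuclideanSpace.single i 1) (∑ j, k j • EuclideanSpace.single j 1) := by
        rw [← h_coord, ← h_coord]
    _ = ∑ i, ∑ j, h i * (hess u x i j * k j) := by
        simp only [map_sum, map_smul, sum_apply, smul_apply, smul_eq_mul, Finset.mul_sum,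
          hess_apply hu, ← hU]
        rw [Finset.sum_comm]
        exact Finset.sum_congr rfl fun i _ => Finset.sum_congr rfl fun j _ => by ring
    _ = ⟪h, toEuclideanCLM (𝕜 := ℝ) (hess u x) k⟫ := by
        simp only [Matrix.inner_toEuclideanCLM, dotProduct, Matrix.mulVec, Finset.mul_sum]

/-- The quadratic polynomial `y ↦ a + ℓ (y - x) + ⟨m (y - x), y - x⟩ / 2` with value `a`,
differential `ℓ` and (for symmetric `m`) Hessian `m` at `x`. These are the only test functions
used. -/
def paraboloid (a : ℝ) (ℓ : E d →L[ℝ] ℝ) (m : Matrix (Fin d) (Fin d) ℝ) (x y : E d) : ℝ :=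
  a + ℓ (y - x) + ⟪y - x, toEuclideanCLM (𝕜 := ℝ) m (y - x)⟫ / 2

variable (a : ℝ) (ℓ : E d →L[ℝ] ℝ)

theorem contDiff_paraboloid (m : Matrix (Fin d) (Fin d) ℝ) (x : E d) {k : WithTop ℕ∞} :
    ContDiff ℝ k (paraboloid a ℓ m x) := by
  have h_inner : ContDiff ℝ k fun y => ⟪y - x, toEuclideanCLM (𝕜 := ℝ) m (y - x)⟫ :=
    (contDiff_id.sub contDiff_const).inner ℝ
      ((toEuclideanCLM (𝕜 := ℝ) m).contDiff.comp (contDiff_id.sub contDiff_const))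
  unfold paraboloid
  fun_prop

theorem paraboloid_self (m : Matrix (Fin d) (Fin d) ℝ) (x : E d) :
    paraboloid a ℓ m x x = a := by
  simp [paraboloid]

theorem paraboloid_sub_const (m : Matrix (Fin d) (Fin d) ℝ) (c : ℝ) (x y : E d) :
    paraboloid (a - c) ℓ m x y = paraboloid a ℓ m x y - c := by
  unfold paraboloid; ring

theorem hasFDerivAt_paraboloid (hm : m.IsSymm) (x y : E d) :
    HasFDerivAt (paraboloid a ℓ m x) (ℓ + innerSL ℝ (toEuclideanCLM (𝕜 := ℝ) m (y - x))) y := by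
  have h_sub : HasFDerivAt (fun y : E d => y - x) (ContinuousLinearMap.id ℝ (E d)) y :=
    (hasFDerivAt_id y).sub_const x
  have h_quad :=
    (h_sub.inner ℝ ((toEuclideanCLM (𝕜 := ℝ) m).hasFDerivAt.comp y h_sub)).mul_const 2⁻¹
  refine (((ℓ.hasFDerivAt.comp y h_sub).const_add a).add h_quad).congr_fderiv ?_
  ext k
  have h_adj := inner_toEuclideanCLM_left hm (y - x) k
  simp only [add_apply, smul_apply, ContinuousLinearMap.comp_apply, ContinuousLinearMap.prod_apply,
    fderivInnerCLM_apply, ContinuousLinearMap.id_apply, innerSL_apply_apply, smul_eq_mul, ← h_adj,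
    real_inner_comm _ k, Function.comp_apply]
  ring

theorem hess_paraboloid (hm : m.IsSymm) (x y : E d) : hess (paraboloid a ℓ m x) y = m := by
  have h_fderiv : fderiv ℝ (paraboloid a ℓ m x) =
      fun y => ℓ + innerSL ℝ (toEuclideanCLM (𝕜 := ℝ) m (y - x)) :=
    funext fun y => (hasFDerivAt_paraboloid a ℓ hm x y).fderiv
  have h_fderiv2 : HasFDerivAt (fderiv ℝ (paraboloid a ℓ m x))
      (innerSL ℝ ∘L toEuclideanCLM (𝕜 := ℝ) m) y := by
    rw [h_fderiv]
    exact ((innerSL ℝ ∘L toEuclideanCLM (𝕜 := ℝ) m).hasFDerivAt.comp y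
      ((hasFDerivAt_id y).sub_const x)).const_add ℓ
  ext i j
  rw [hess_apply h_fderiv2.differentiableAt, h_fderiv2.fderiv, ContinuousLinearMap.comp_apply,
    innerSL_apply_apply, inner_toEuclideanCLM_left hm]
  simp [Matrix.inner_toEuclideanCLM]

theorem isLittleO_sub_paraboloid_hess (hu : ContDiffAt ℝ 2 u x) :
    (fun y => u y - paraboloid (u x) (fderiv ℝ u x) (hess u x) x y) =o[𝓝 x]
      fun y => ‖y - x‖ ^ 2 := by
  have hDu := differentiableAt_fderiv_of_contDiffAt_two hu
  have h_diff : ∀ᶠ y in 𝓝 x, DifferentiableAt ℝ u y :=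
    (hu.eventually (by simp)).mono fun y hy => hy.differentiableAt two_ne_zero
  obtain ⟨ρ, hρ, h_ball⟩ := Metric.eventually_nhds_iff_ball.1 h_diff
  set P := paraboloid (u x) (fderiv ℝ u x) (hess u x) x
  set P' := fun y => fderiv ℝ u x + innerSL ℝ (toEuclideanCLM (𝕜 := ℝ) (hess u x) (y - x))
  have h_deriv : ∀ y ∈ ball x ρ,
      HasFDerivWithinAt (fun y => u y - P y) (fderiv ℝ u y - P' y) (ball x ρ) y := fun y hy =>
    ((h_ball y hy).hasFDerivAt.sub
      (hasFDerivAt_paraboloid _ _ (isSymm_hess hu) x y)).hasFDerivWithinAt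
  have h_deriv_o : (fun y => fderiv ℝ u y - P' y) =o[𝓝 x] fun y => ‖y - x‖ ^ 1 := by
    have h := hDu.hasFDerivAt.isLittleO.norm_right
    simp only [pow_one]
    refine h.congr_left fun y => ?_
    ext k
    simp [P', fderiv_fderiv_apply_eq_inner_hess hDu, sub_sub,
      inner_toEuclideanCLM_left (isSymm_hess hu)]
  have h_o := (convex_ball x ρ).isLittleO_pow_succ (mem_ball_self hρ) h_deriv
    (h_deriv_o.mono nhdsWithin_le_nhds)
  simpa [nhdsWithin_eq_nhds.2 (ball_mem_nhds x hρ), P, paraboloid_self] using h_o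

theorem eventually_add_le_paraboloid (hu : ContDiffAt ℝ 2 u x) {κ : ℝ} (hκ : 0 < κ)
    (hm : (m - hess u x - κ • (1 : Matrix (Fin d) (Fin d) ℝ)).PosSemidef) :
    ∀ᶠ y in 𝓝 x, u y + κ / 4 * ‖y - x‖ ^ 2 ≤ paraboloid (u x) (fderiv ℝ u x) m x y := by
  filter_upwards [(isLittleO_sub_paraboloid_hess hu).def (by positivity : 0 < κ / 4)] with y hy
  set v := y - x with hv
  have h_gap : 0 ≤ ⟪v, toEuclideanCLM (𝕜 := ℝ) (m - hess u x - κ • 1) v⟫ :=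
    (posSemidef_iff_inner_toEuclideanCLM (Matrix.isHermitian_iff_isSymm.1 hm.isHermitian)).1 hm v
  have h_taylor := (le_abs_self _).trans hy
  simp only [map_sub, map_smul, map_one, sub_apply, smul_apply, one_apply_eq_self, inner_sub_right,
    real_inner_smul_right, real_inner_self_eq_norm_sq] at h_gap
  simp only [norm_pow, norm_norm, paraboloid, ← hv] at h_taylor ⊢
  linarith

end Hessian

section Comparison

variable {d : ℕ} {p N : ℝ} {Ω : Set (E d)} {H : Matrix (Fin d) (Fin d) ℝ → E d → ℝ}
  {f u : E d → ℝ} {x : E d} {m : Matrix (Fin d) (Fin d) ℝ}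

/-- The comparison inequality
`u x₀ ≤ φ x₀ + sup_{∂B_r(x₀)} (u - φ)₊ + N r² (⨍_{B_r(x₀)} ((f - H[φ])₋)^p)^{1/p}`
for all balls with closure in `Ω` and all test functions `φ` that are `C²` on the whole space,
evaluated only at the centre of the ball. Since `nLp` takes absolute values, `min · 0` stands for
the negative part. -/
def CenterComparison (p N : ℝ) (Ω : Set (E d)) (H : Matrix (Fin d) (Fin d) ℝ → E d → ℝ)
    (f u : E d → ℝ) : Prop :=
  ∀ (x₀ : E d) (r : ℝ), 0 < r → closedBall x₀ r ⊆ Ω → ∀ φ : E d → ℝ, ContDiff ℝ 2 φ →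
    ENNReal.ofReal (u x₀ - φ x₀) ≤
      (⨆ y ∈ sphere x₀ r, ENNReal.ofReal (u y - φ y)) +
        ENNReal.ofReal (N * r ^ 2) * nLp p (ball x₀ r) fun y => min (f y - H (hess φ y) y) 0

theorem CenterComparison.eventually_le_nLp (hcomp : CenterComparison p N Ω H f u)
    (hΩ : Ω ∈ 𝓝 x) (hu : ContDiffAt ℝ 2 u x) (hm : m.IsSymm) {κ : ℝ} (hκ : 0 < κ)
    (hmκ : (m - hess u x - κ • (1 : Matrix (Fin d) (Fin d) ℝ)).PosSemidef) :
    ∀ᶠ r in 𝓝[>] 0, ENNReal.ofReal (κ / 4) ≤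
      ENNReal.ofReal N * nLp p (ball x r) fun y => min (f y - H m y) 0 := by
  filter_upwards [self_mem_nhdsWithin, nhdsWithin_le_nhds (eventually_closedBall_subset hΩ),
    nhdsWithin_le_nhds (eventually_closedBall_subset (eventually_add_le_paraboloid hu hκ hmκ))]
    with r (hr : 0 < r) hrΩ h_touch
  have h := hcomp x r hr hrΩ (paraboloid (u x - κ / 4 * r ^ 2) (fderiv ℝ u x) m x)
    (contDiff_paraboloid _ _ _ _)
  have h_sphere : ⨆ y ∈ sphere x r, ENNReal.ofReal
      (u y - paraboloid (u x - κ / 4 * r ^ 2) (fderiv ℝ u x) m x y) = 0 := by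
    refine le_antisymm (iSup₂_le fun y hy => ?_) zero_le
    have hy_touch : u y + κ / 4 * ‖y - x‖ ^ 2 ≤ _ := h_touch (sphere_subset_closedBall hy)
    rw [mem_sphere_iff_norm.1 hy] at hy_touch
    rw [ENNReal.ofReal_of_nonpos (by rw [paraboloid_sub_const]; linarith)]
  have hr2 : ENNReal.ofReal (r ^ 2) ≠ 0 := (ENNReal.ofReal_pos.2 (by positivity)).ne'
  simp only [h_sphere, zero_add, paraboloid_self, hess_paraboloid _ _ hm, sub_sub_cancel] at h
  rwa [ENNReal.ofReal_mul' (sq_nonneg r), ENNReal.ofReal_mul' (sq_nonneg r), mul_right_comm,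
    ENNReal.mul_le_mul_iff_left hr2 ENNReal.ofReal_ne_top] at h

theorem CenterComparison.le_of_tendsto_nLp (hcomp : CenterComparison p N Ω H f u)
    (hΩ : Ω ∈ 𝓝 x) (hu : ContDiffAt ℝ 2 u x) (hm : m.IsSymm) {κ : ℝ} (hκ : 0 < κ)
    (hmκ : (m - hess u x - κ • (1 : Matrix (Fin d) (Fin d) ℝ)).PosSemidef)
    (h_lim : Tendsto (fun r => nLp p (ball x r) fun y => min (f y - H m y) 0) (𝓝[>] 0)
      (𝓝 (ENNReal.ofReal |min (f x - H m x) 0|))) :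
    f x ≤ H m x := by
  by_contra! h_lt
  have h_min : min (f x - H m x) 0 = 0 := min_eq_right (sub_pos.2 h_lt).le
  have h_zero := ENNReal.Tendsto.const_mul (a := ENNReal.ofReal N) h_lim
    (Or.inr ENNReal.ofReal_ne_top)
  rw [h_min, abs_zero, ENNReal.ofReal_zero, mul_zero] at h_zero
  have hκ_le : ENNReal.ofReal (κ / 4) ≤ 0 :=
    ge_of_tendsto h_zero (hcomp.eventually_le_nLp hΩ hu hm hκ hmκ)
  exact (ENNReal.ofReal_pos.2 (by positivity)).not_ge hκ_le

end Comparison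

theorem stmt_14_general {d : ℕ} {δ p : ℝ} (hδ : 0 < δ) (hp : 0 < p) {Ω : Set (E d)}
    (hΩ : IsOpen Ω) {H : Matrix (Fin d) (Fin d) ℝ → E d → ℝ} {f u : E d → ℝ}
    (hHe : ∀ x ∈ Ω, Elliptic δ fun m => H m x)
    (hHm : ∀ m : Matrix (Fin d) (Fin d) ℝ, m.IsSymm → Measurable (H m))
    (hH0 : ∀ K, IsCompact K → K ⊆ Ω → ∫⁻ x in K, ENNReal.ofReal (|H 0 x| ^ p) < ⊤)
    (hfm : Measurable f)
    (hf : ∀ K, IsCompact K → K ⊆ Ω → ∫⁻ x in K, ENNReal.ofReal (|f x| ^ p) < ⊤)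
    (hu : ContDiffOn ℝ 2 u Ω) (hcomp : ∃ N, CenterComparison p N Ω H f u) :
    ∀ᵐ x, x ∈ Ω → f x ≤ H (hess u x) x := by
  obtain ⟨N, hcomp⟩ := hcomp
  obtain ⟨D, hD_count, hD⟩ :=
    TopologicalSpace.exists_countable_dense {m : Matrix (Fin d) (Fin d) ℝ // m.IsSymm}
  have h_lebesgue : ∀ᵐ x, ∀ m ∈ D, x ∈ Ω →
      Tendsto (fun r => nLp p (ball x r) fun y => min (f y - H m.1 y) 0) (𝓝[>] 0)
        (𝓝 (ENNReal.ofReal |min (f x - H m.1 x) 0|)) :=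
    (ae_ball_iff hD_count).2 fun m _ => ae_tendsto_nLp_ball hp hΩ
      ((hfm.sub (hHm m.1 m.2)).min measurable_const) fun K hK hKΩ =>
        Elliptic.lintegral_abs_min_sub_rpow_lt_top hδ.le hp hK (fun x hx => hHe x (hKΩ hx)) m.2
          (hHm 0 Matrix.isSymm_zero) (hHm m.1 m.2) hfm (hH0 K hK hKΩ) (hf K hK hKΩ)
  filter_upwards [h_lebesgue] with x hx hxΩ
  have hΩx : Ω ∈ 𝓝 x := hΩ.mem_nhds hxΩ
  have hux : ContDiffAt ℝ 2 u x := hu.contDiffAt hΩx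
  exact (hHe x hxΩ).le_of_forall_mem_dense hδ.le hD (isSymm_hess hux) fun m hmD κ hκ hmκ =>
    hcomp.le_of_tendsto_nLp hΩx hux m.2 hκ hmκ (hx m hmD hxΩ)

/-- The 'if' direction of the paper's Lemma 5.2: comparison with smooth test functions
implies `Ĥ[u] ≥ f` almost everywhere. -/
theorem stmt_14 (d : ℕ) (hd : 1 ≤ d) (δ : ℝ) (hδ : δ ∈ Set.Ioc (0 : ℝ) 1)
    (p : ℝ) (hp : (d : ℝ) / 2 < p) (R : ℝ) (hR : 0 < R)
    (H : Matrix (Fin d) (Fin d) ℝ → E d → ℝ) (f : E d → ℝ) (u : E d → ℝ)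
    (hHe : ∀ x, Elliptic δ fun m => H m x)
    (hHm : ∀ m, Measurable fun x => H m x)
    (hH0 : ∀ A : Set (E d), IsCompact A → A ⊆ ball (0 : E d) R →
      (∫⁻ x in A, ENNReal.ofReal (|H 0 x| ^ p)) < ⊤)
    (hfm : Measurable f)
    (hfl : ∀ A : Set (E d), IsCompact A → A ⊆ ball (0 : E d) R →
      (∫⁻ x in A, ENNReal.ofReal (|f x| ^ p)) < ⊤)
    (hu : ContDiffOn ℝ 2 u (ball (0 : E d) R))
    (hcomp : ∃ N : ℝ, ∀ (x₀ : E d) (r : ℝ), 0 < r →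
      closedBall x₀ r ⊆ ball (0 : E d) R →
      ∀ φ : E d → ℝ, ContDiffOn ℝ 2 φ (closedBall x₀ r) →
        ∀ x ∈ ball x₀ r,
          ENNReal.ofReal (u x - φ x) ≤
            (⨆ y ∈ sphere x₀ r, ENNReal.ofReal (u y - φ y)) +
              ENNReal.ofReal (N * r ^ 2) *
                nLp p (ball x₀ r) (fun y => min (f y - H (hess φ y) y) 0)) :
    ∀ᵐ x ∂volume, x ∈ ball (0 : E d) R → f x ≤ H (hess u x) x := by
  have hp0 : 0 < p := lt_of_le_of_lt (by positivity) hp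
  refine stmt_14_general hδ.1 hp0 isOpen_ball (fun x _ => hHe x) (fun m _ => hHm m) hH0 hfm hfl
    hu (hcomp.imp fun N hN x₀ r hr hrR φ hφ => ?_)
  exact hN x₀ r hr hrR φ hφ.contDiffOn x₀ (mem_ball_self hr)
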